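/- arXiv:1310.6056 — 2 statements merged into one kernel-verified Lean document; each statement's English description precedes it below -/
import Mathlib

section
/- For every positive integer n, the number of pairs (x, y) ∈ ℤ² with x² + xy + y² = n, x ≡ 1 (mod 2), and y ≡ 0 (mod 2) equals 2 ∑_{d|n} χ₋₃(d) − 2 ∑_{d|(n/4)} χ₋₃(d). -/
open Finset

/-- The Kronecker symbol `(-3/d)` for positive `d`. -/
def chiM3 (d : ℕ) : ℤ := if d % 3 = 1 then 1 else if d % 3 = 2 then -1 else 0

/-- `Sdiv χ n k = ∑_{d ∣ n/k} χ d`, interpreted as `0` when `k` does not divide `n`. -/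
def Sdiv (χ : ℕ → ℤ) (n k : ℕ) : ℤ := if k ∣ n then ∑ d ∈ (n / k).divisors, χ d else 0

/-!
Let `r n` be the number of elements of norm `n` in the ring `ℤ[ω]`, `ω² = ω - 1`, of Eisenstein
integers, where `x + yω` has norm `x² + xy + y²`. According to whether a rational prime `p`
ramifies, splits or is inert, looking at which elements of norm `pn` are divisible by a given
factor of `p` gives the Hecke recurrence `r (pn) = (1 + χ₋₃ p) r n - χ₋₃ p r (n/p)`. The divisor sum
`∑_{d ∣ n} χ₋₃ d` satisfies the same recurrence, so `r n = 6 ∑_{d ∣ n} χ₋₃ d`.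

Multiplication by `ω` permutes the three nonzero residue classes modulo `2` cyclically, so each of
them contains a third of the elements of norm `n` not divisible by `2`, of which there are
`r n - r (n/4)`.
-/

section HeckeRecurrence

variable {R : Type*}

/-- The value of `f` at `n / k`, with the convention that it vanishes when `k` does not divide
`n`; this is how arithmetic functions at the argument `n/k` are read in Hecke-type recurrences. -/
def atQuotient [Zero R] (f : ℕ → R) (n k : ℕ) : R := if k ∣ n then f (n / k) else 0

lemma atQuotient_one_right [Zero R] (f : ℕ → R) (n : ℕ) : atQuotient f n 1 = f n := by
  simp [atQuotient]

lemma atQuotient_mul_left [Zero R] (f : ℕ → R) {c : ℕ} (hc : c ≠ 0) (n k : ℕ) :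
    atQuotient f (c * n) (c * k) = atQuotient f n k := by
  simp only [atQuotient, Nat.mul_dvd_mul_iff_left (Nat.pos_of_ne_zero hc),
    Nat.mul_div_mul_left _ _ (Nat.pos_of_ne_zero hc)]

lemma atQuotient_mul_self [Zero R] (f : ℕ → R) {k : ℕ} (hk : k ≠ 0) (n : ℕ) :
    atQuotient f (k * n) k = f n := by
  simpa only [mul_one, atQuotient_one_right] using atQuotient_mul_left f hk n 1

lemma natCast_atQuotient [AddMonoidWithOne R] (f : ℕ → ℕ) (n k : ℕ) :
    ((atQuotient f n k : ℕ) : R) = atQuotient (fun m => (f m : R)) n k := by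
  simp only [atQuotient, Nat.cast_ite, Nat.cast_zero]

lemma atQuotient_congr [Zero R] {f g : ℕ → R} {n k : ℕ} (hn : 0 < n)
    (h : ∀ m, 0 < m → m ≤ n → f m = g m) : atQuotient f n k = atQuotient g n k := by
  refine ite_congr rfl (fun hk => ?_) fun _ => rfl
  exact h _ (Nat.div_pos (Nat.le_of_dvd hn hk) (Nat.pos_of_dvd_of_pos hk hn)) (Nat.div_le_self n k)

lemma Sdiv_eq_atQuotient (χ : ℕ → ℤ) (n k : ℕ) :
    Sdiv χ n k = atQuotient (fun m => ∑ d ∈ m.divisors, χ d) n k := rfl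

variable [CommRing R]

/-- The recurrence at all primes satisfied by the coefficients of a Hecke eigenform of weight `1`
and character `χ` whose eigenvalue at `p` is `1 + χ p`. -/
def HeckeRecurrence (χ f : ℕ → R) : Prop :=
  ∀ p m, p.Prime → 0 < m → f (p * m) = (1 + χ p) * f m - χ p * atQuotient f m p

theorem HeckeRecurrence.mul_eq_mul {χ f g : ℕ → R} (hf : HeckeRecurrence χ f)
    (hg : HeckeRecurrence χ g) {n : ℕ} (hn : 0 < n) : f n * g 1 = f 1 * g n := by
  induction n using Nat.strong_induction_on with
  | _ n ih =>
  obtain rfl | hn1 := eq_or_ne n 1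
  · rfl
  obtain ⟨p, hp, m, rfl⟩ := Nat.exists_prime_and_dvd hn1
  have hm : 0 < m := Nat.pos_of_mul_pos_left hn
  have hlt : m < p * m := lt_mul_of_one_lt_left hm hp.one_lt
  have hquot : atQuotient f m p * g 1 = f 1 * atQuotient g m p := by
    have := atQuotient_congr (k := p) hm fun k hk hkm => ih k (hkm.trans_lt hlt) hk
    simpa only [atQuotient, ite_mul, mul_ite, zero_mul, mul_zero] using this
  rw [hf p m hp hm, hg p m hp hm]
  linear_combination (1 + χ p) * ih m hlt hm - χ p * hquot

lemma sum_divisors_filter_dvd {χ : ℕ → R} (hχ : ∀ a b, χ (a * b) = χ a * χ b) {k n : ℕ}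
    (hn : 0 < n) :
    ∑ d ∈ n.divisors with k ∣ d, χ d = χ k * atQuotient (fun m => ∑ d ∈ m.divisors, χ d) n k := by
  by_cases hk : k ∣ n
  · obtain ⟨m, rfl⟩ := hk
    have hk0 : 0 < k := Nat.pos_of_mul_pos_right hn
    have hfilter : (k * m).divisors.filter (k ∣ ·) = m.divisors.image (k * ·) := by
      ext d
      simp only [mem_filter, mem_image, Nat.mem_divisors]
      constructor
      · rintro ⟨⟨hd, hkm⟩, e, rfl⟩
        exact ⟨e, ⟨Nat.dvd_of_mul_dvd_mul_left hk0 hd, right_ne_zero_of_mul hkm⟩, rfl⟩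
      · rintro ⟨e, ⟨he, -⟩, rfl⟩
        exact ⟨⟨Nat.mul_dvd_mul_left k he, hn.ne'⟩, dvd_mul_right k e⟩
    rw [hfilter, sum_image (mul_right_injective₀ hk0.ne').injOn, atQuotient,
      if_pos (dvd_mul_right k m), Nat.mul_div_cancel_left m hk0, mul_sum]
    exact sum_congr rfl fun d _ => hχ k d
  · rw [atQuotient, if_neg hk, mul_zero]
    refine sum_eq_zero fun d hd => absurd ?_ hk
    rw [mem_filter] at hd
    exact hd.2.trans (Nat.dvd_of_mem_divisors hd.1)

lemma divisors_prime_mul_filter_not_dvd {p m : ℕ} (hp : p.Prime) :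
    (p * m).divisors.filter (¬ p ∣ ·) = m.divisors.filter (¬ p ∣ ·) := by
  ext d
  simp only [mem_filter, Nat.mem_divisors, mul_ne_zero_iff, hp.ne_zero, ne_eq, not_false_eq_true,
    true_and]
  refine and_congr_left fun hd => and_congr_left fun _ => ?_
  exact ((hp.coprime_iff_not_dvd.mpr hd).symm).dvd_mul_left

theorem heckeRecurrence_sum_divisors {χ : ℕ → R} (hχ : ∀ a b, χ (a * b) = χ a * χ b) :
    HeckeRecurrence χ fun n => ∑ d ∈ n.divisors, χ d := by
  intro p m hp hm
  have hpm := sum_filter_add_sum_filter_not (p * m).divisors (p ∣ ·) χ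
  have hm' := sum_filter_add_sum_filter_not m.divisors (p ∣ ·) χ
  rw [sum_divisors_filter_dvd hχ (Nat.mul_pos hp.pos hm), atQuotient_mul_self _ hp.ne_zero,
    divisors_prime_mul_filter_not_dvd hp] at hpm
  rw [sum_divisors_filter_dvd hχ hm] at hm'
  linear_combination hm' - hpm

end HeckeRecurrence

section QuadraticAlgebra

open QuadraticAlgebra nonZeroDivisors

variable {R : Type*} [CommRing R] {a b : R}

lemma algebraMap_dvd_of_dvd_norm_of_dvd_im {p : R} (hp : Prime p) {z : QuadraticAlgebra R a b}
    (hnorm : p ∣ z.norm) (him : p ∣ z.im) : algebraMap R (QuadraticAlgebra R a b) p ∣ z := by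
  refine algebraMap_dvd_iff.mpr ⟨hp.dvd_of_dvd_pow (n := 2) ?_, him⟩
  have hre : z.re ^ 2 = z.norm - z.im * (b * z.re - a * z.im) := by rw [norm_def]; ring
  rw [hre]
  exact dvd_sub hnorm (him.mul_right _)

lemma im_mul_star_mul_im_mul (z w : QuadraticAlgebra R a b) :
    (z * star w).im * (z * w).im = z.im ^ 2 * w.norm - w.im ^ 2 * z.norm := by
  simp only [im_mul, re_star, im_star, norm_def]
  ring

variable [IsDomain R]

lemma dvd_of_algebraMap_norm_dvd_mul_star {π z : QuadraticAlgebra R a b} (hπ : π.norm ≠ 0)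
    (h : algebraMap R (QuadraticAlgebra R a b) π.norm ∣ z * star π) : π ∣ z := by
  have hstar : star π ∈ (QuadraticAlgebra R a b)⁰ :=
    norm_mem_nonZeroDivisors_iff.mp (by simpa using hπ)
  rwa [algebraMap_norm_eq_mul_star, dvd_cancel_right_mem_nonZeroDivisors hstar] at h

theorem dvd_or_star_dvd_of_norm_dvd_norm {π z : QuadraticAlgebra R a b} (hπ : Prime π.norm)
    (h : π.norm ∣ z.norm) : π ∣ z ∨ star π ∣ z := by
  have him : π.norm ∣ (z * star π).im * (z * π).im := by
    rw [im_mul_star_mul_im_mul]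
    exact dvd_sub (dvd_mul_left _ _) (h.mul_left _)
  refine (hπ.dvd_or_dvd him).imp (fun h' => ?_) fun h' => ?_
  · refine dvd_of_algebraMap_norm_dvd_mul_star hπ.ne_zero ?_
    exact algebraMap_dvd_of_dvd_norm_of_dvd_im hπ (by simp) h'
  · refine dvd_of_algebraMap_norm_dvd_mul_star (by simpa using hπ.ne_zero) ?_
    rw [QuadraticAlgebra.norm_star, star_star]
    exact algebraMap_dvd_of_dvd_norm_of_dvd_im hπ (by simp) h'

lemma not_norm_dvd_trace {π : QuadraticAlgebra R a b} (hπ : Prime π.norm)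
    (hdisc : ¬ π.norm ∣ b ^ 2 + 4 * a) : ¬ π.norm ∣ trace π := by
  intro htrace
  have hmul : π.norm ∣ (b ^ 2 + 4 * a) * π.im ^ 2 := by
    have heq : (b ^ 2 + 4 * a) * π.im ^ 2 = trace π ^ 2 - π.norm * 4 := by
      rw [trace_def, norm_def]; ring
    rw [heq]
    exact dvd_sub (dvd_pow htrace two_ne_zero) (dvd_mul_right _ _)
  have him : π.norm ∣ π.im := hπ.dvd_of_dvd_pow ((hπ.dvd_or_dvd hmul).resolve_left hdisc)
  have hsq : π.norm ^ 2 ∣ π.norm ^ 1 := by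
    simpa using
      map_dvd QuadraticAlgebra.norm (algebraMap_dvd_of_dvd_norm_of_dvd_im hπ dvd_rfl him)
  exact absurd ((pow_dvd_pow_iff hπ.ne_zero hπ.not_isUnit).mp hsq) (by norm_num)

theorem dvd_and_star_dvd_iff {π z : QuadraticAlgebra R a b} (hπ : Prime π.norm)
    (hdisc : ¬ π.norm ∣ b ^ 2 + 4 * a) :
    π ∣ z ∧ star π ∣ z ↔ algebraMap R (QuadraticAlgebra R a b) π.norm ∣ z := by
  constructor
  · rintro ⟨⟨u, hu⟩, ⟨v, hv⟩⟩
    have htrace : algebraMap R (QuadraticAlgebra R a b) π.norm ∣ trace π • z := by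
      refine ⟨u + v, ?_⟩
      rw [Algebra.smul_def, algebraMap_trace_eq_add_star, algebraMap_norm_eq_mul_star]
      linear_combination π * hv + star π * hu
    rw [algebraMap_dvd_iff, re_smul, im_smul, smul_eq_mul, smul_eq_mul] at htrace
    exact algebraMap_dvd_iff.mpr <|
      htrace.imp (fun h => (hπ.dvd_or_dvd h).resolve_left (not_norm_dvd_trace hπ hdisc))
        fun h => (hπ.dvd_or_dvd h).resolve_left (not_norm_dvd_trace hπ hdisc)
  · rw [algebraMap_norm_eq_mul_star]
    exact fun h => ⟨dvd_of_mul_right_dvd h, dvd_of_mul_left_dvd h⟩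

end QuadraticAlgebra

section NormCount

open QuadraticAlgebra nonZeroDivisors

/-- The number of elements of norm `n` in the quadratic ring `ℤ[ω]`, `ω² = a + bω`, i.e. of
representations of `n` by the form `x² + bxy - ay²`; it is meaningful when the form is definite,
since `Set.ncard` is `0` on infinite sets. -/
noncomputable def normCount (a b : ℤ) (n : ℕ) : ℕ :=
  {z : QuadraticAlgebra ℤ a b | z.norm = n}.ncard

variable {a b : ℤ}

theorem ncard_norm_eq_and_dvd {α : QuadraticAlgebra ℤ a b} {k : ℕ} (hk : k ≠ 0)
    (hα : α.norm = k) (n : ℕ) :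
    {z : QuadraticAlgebra ℤ a b | z.norm = n ∧ α ∣ z}.ncard = atQuotient (normCount a b) n k := by
  have hk' : (k : ℤ) ≠ 0 := mod_cast hk
  have hαreg : α ∈ (QuadraticAlgebra ℤ a b)⁰ := norm_mem_nonZeroDivisors_iff.mp (by simpa [hα])
  by_cases hkn : k ∣ n
  · obtain ⟨m, rfl⟩ := hkn
    have himage : {z : QuadraticAlgebra ℤ a b | z.norm = (k * m : ℕ) ∧ α ∣ z} =
        (α * ·) '' {z | z.norm = m} := by
      ext z
      constructor
      · rintro ⟨hz, w, rfl⟩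
        refine ⟨w, mul_left_cancel₀ hk' ?_, rfl⟩
        rw [← hα, ← map_mul, hz, hα, Nat.cast_mul]
      · rintro ⟨w, hw, rfl⟩
        exact ⟨by rw [map_mul, hα, hw, Nat.cast_mul], dvd_mul_right α w⟩
    have hinj : Function.Injective (α * ·) := fun _ _ =>
      (mul_cancel_left_mem_nonZeroDivisors hαreg).mp
    rw [himage, Set.ncard_image_of_injective _ hinj, atQuotient, if_pos (dvd_mul_right k m),
      Nat.mul_div_cancel_left m (Nat.pos_of_ne_zero hk), normCount]
  · have hempty : {z : QuadraticAlgebra ℤ a b | z.norm = n ∧ α ∣ z} = ∅ := by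
      refine Set.eq_empty_of_forall_notMem fun z ⟨hz, hdvd⟩ => hkn ?_
      have := map_dvd QuadraticAlgebra.norm hdvd
      rwa [hz, hα, Int.natCast_dvd_natCast] at this
    rw [atQuotient, if_neg hkn, hempty, Set.ncard_empty]

theorem normCount_eq_atQuotient {α : QuadraticAlgebra ℤ a b} {k n : ℕ} (hk : k ≠ 0)
    (hα : α.norm = k) (hdvd : ∀ z : QuadraticAlgebra ℤ a b, z.norm = n → α ∣ z) :
    normCount a b n = atQuotient (normCount a b) n k := by
  rw [← ncard_norm_eq_and_dvd hk hα, normCount]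
  congr 1
  ext z
  exact ⟨fun hz => ⟨hz, hdvd z hz⟩, And.left⟩

lemma ncard_norm_eq_mul_and_dvd {α : QuadraticAlgebra ℤ a b} {k : ℕ} (hk : k ≠ 0)
    (hα : α.norm = k) (n : ℕ) :
    {z : QuadraticAlgebra ℤ a b | z.norm = (k * n : ℕ) ∧ α ∣ z}.ncard = normCount a b n := by
  rw [ncard_norm_eq_and_dvd hk hα, atQuotient_mul_self _ hk]

lemma ncard_norm_eq_mul_and_algebraMap_dvd {k : ℕ} (hk : k ≠ 0) (n : ℕ) :
    {z : QuadraticAlgebra ℤ a b |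
        z.norm = (k * n : ℕ) ∧ algebraMap ℤ (QuadraticAlgebra ℤ a b) k ∣ z}.ncard =
      atQuotient (normCount a b) n k := by
  rw [ncard_norm_eq_and_dvd (mul_ne_zero hk hk) (by simp [sq]), atQuotient_mul_left _ hk]

theorem normCount_prime_mul_of_dvd_star {p : ℕ} (hp : p.Prime) {π : QuadraticAlgebra ℤ a b}
    (hπ : π.norm = p) (hstar : π ∣ star π) (n : ℕ) :
    normCount a b (p * n) = normCount a b n := by
  have hprime : Prime π.norm := hπ ▸ Nat.prime_iff_prime_int.mp hp
  rw [← atQuotient_mul_self (normCount a b) hp.ne_zero n]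
  refine normCount_eq_atQuotient hp.ne_zero hπ fun z hz => ?_
  have hnorm : π.norm ∣ z.norm := by
    rw [hz, hπ, Nat.cast_mul]
    exact dvd_mul_right _ _
  exact (dvd_or_star_dvd_of_norm_dvd_norm hprime hnorm).elim id hstar.trans

theorem normCount_mul_of_forall_dvd {k : ℕ} (hk : k ≠ 0)
    (hdvd : ∀ z : QuadraticAlgebra ℤ a b, (k : ℤ) ∣ z.norm →
      algebraMap ℤ (QuadraticAlgebra ℤ a b) k ∣ z) (n : ℕ) :
    normCount a b (k * n) = atQuotient (normCount a b) n k := by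
  rw [← atQuotient_mul_left _ hk]
  refine normCount_eq_atQuotient (mul_ne_zero hk hk) (by simp [sq]) fun z hz => hdvd z ?_
  rw [hz, Nat.cast_mul]
  exact dvd_mul_right _ _

theorem normCount_prime_mul_of_not_dvd_disc {p : ℕ} (hp : p.Prime) {π : QuadraticAlgebra ℤ a b}
    (hπ : π.norm = p) (hdisc : ¬ (p : ℤ) ∣ b ^ 2 + 4 * a) {n : ℕ}
    (hfin : {z : QuadraticAlgebra ℤ a b | z.norm = (p * n : ℕ)}.Finite) :
    normCount a b (p * n) + atQuotient (normCount a b) n p = 2 * normCount a b n := by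
  have hprime : Prime π.norm := hπ ▸ Nat.prime_iff_prime_int.mp hp
  set A := {z : QuadraticAlgebra ℤ a b | z.norm = (p * n : ℕ) ∧ π ∣ z}
  set B := {z : QuadraticAlgebra ℤ a b | z.norm = (p * n : ℕ) ∧ star π ∣ z}
  have hunion : A ∪ B = {z : QuadraticAlgebra ℤ a b | z.norm = (p * n : ℕ)} := by
    ext z
    refine ⟨fun h => h.elim And.left And.left, fun hz => ?_⟩
    have hnorm : π.norm ∣ z.norm := by
      rw [hz, hπ, Nat.cast_mul]
      exact dvd_mul_right _ _
    exact (dvd_or_star_dvd_of_norm_dvd_norm hprime hnorm).imp (⟨hz, ·⟩) (⟨hz, ·⟩)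
  have hinter : A ∩ B =
      {z : QuadraticAlgebra ℤ a b |
        z.norm = (p * n : ℕ) ∧ algebraMap ℤ (QuadraticAlgebra ℤ a b) p ∣ z} := by
    ext z
    have := dvd_and_star_dvd_iff (z := z) hprime (hπ ▸ hdisc)
    rw [hπ] at this
    simp only [A, B, Set.mem_inter_iff, Set.mem_ofPred_eq, ← this]
    tauto
  have hcard := Set.ncard_union_add_ncard_inter A B (hfin.subset fun z hz => hz.1)
    (hfin.subset fun z hz => hz.1)
  rwa [hunion, hinter, ncard_norm_eq_mul_and_algebraMap_dvd hp.ne_zero,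
    ncard_norm_eq_mul_and_dvd hp.ne_zero hπ,
    ncard_norm_eq_mul_and_dvd hp.ne_zero (by rw [QuadraticAlgebra.norm_star, hπ]),
    ← two_mul] at hcard

end NormCount

lemma exists_sq_add_self_add_one_eq_zero_iff {F : Type*} [Field F] [Fintype F] (h3 : (3 : F) ≠ 0) :
    (∃ t : F, t ^ 2 + t + 1 = 0) ↔ 3 ∣ Fintype.card F - 1 := by
  have : NeZero ((3 : ℕ) : F) := ⟨by exact_mod_cast h3⟩
  have hroot (t : F) : t ^ 2 + t + 1 = 0 ↔ IsPrimitiveRoot t 3 := by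
    simp [← Polynomial.isRoot_cyclotomic_iff, Polynomial.cyclotomic_three]
  simp only [hroot]
  constructor
  · rintro ⟨t, ht⟩
    exact ht.dvd_of_pow_eq_one _
      (FiniteField.pow_card_sub_one_eq_one t (ht.ne_zero (by norm_num)))
  · intro h
    classical
    rw [← Fintype.card_units] at h
    obtain ⟨u, hu⟩ := exists_prime_orderOf_dvd_card 3 h
    exact ⟨u, IsPrimitiveRoot.coe_units_iff.mpr (hu ▸ IsPrimitiveRoot.orderOf u)⟩

lemma exists_zmod_sq_add_self_add_one_eq_zero_iff {p : ℕ} (hp : p.Prime) (hp3 : p ≠ 3) :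
    (∃ t : ZMod p, t ^ 2 + t + 1 = 0) ↔ p % 3 = 1 := by
  have : Fact p.Prime := ⟨hp⟩
  have h3 : (3 : ZMod p) ≠ 0 := fun h3 => hp3 <| (Nat.prime_dvd_prime_iff_eq hp Nat.prime_three).mp
    ((ZMod.natCast_eq_zero_iff 3 p).mp (by exact_mod_cast h3))
  rw [exists_sq_add_self_add_one_eq_zero_iff h3, ZMod.card]
  have := hp.pos
  omega

-- Thue's lemma: two of the more than `n` values `x - t * y`, `0 ≤ x, y ≤ √n`, coincide.
lemma exists_sq_lt_and_intCast_eq_mul {n : ℕ} (hn : ¬ IsSquare n) (t : ZMod n) :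
    ∃ x y : ℤ, (x ≠ 0 ∨ y ≠ 0) ∧ x ^ 2 < n ∧ y ^ 2 < n ∧ (x : ZMod n) = t * y := by
  have : NeZero n := ⟨by rintro rfl; exact hn IsSquare.zero⟩
  set k := n.sqrt
  have hsqrt : (k : ℤ) ^ 2 < n := by
    have hne : k ^ 2 ≠ n := fun h => hn ⟨k, by rw [← h, sq]⟩
    exact_mod_cast lt_of_le_of_ne (Nat.sqrt_le' n) hne
  have hsq : ∀ u v : ℕ, u < k + 1 → v < k + 1 → ((u : ℤ) - v) ^ 2 < n := fun u v hu hv =>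
    lt_of_le_of_lt (sq_le_sq' (by omega) (by omega)) hsqrt
  let box := range (k + 1) ×ˢ range (k + 1)
  have hcard : (univ : Finset (ZMod n)).card < box.card := by
    rw [card_univ, ZMod.card, card_product, card_range]
    exact Nat.lt_succ_sqrt n
  obtain ⟨⟨u, v⟩, huv, ⟨u', v'⟩, huv', hne, heq⟩ :=
    exists_ne_map_eq_of_card_lt_of_maps_to hcard
      (f := fun w : ℕ × ℕ => (w.1 : ZMod n) - t * w.2) fun _ _ => mem_univ _
  simp only [box, mem_product, mem_range] at huv huv'
  refine ⟨u - u', v - v', ?_, hsq _ _ huv.1 huv'.1, hsq _ _ huv.2 huv'.2, ?_⟩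
  · rw [ne_eq, Prod.mk.injEq] at hne
    omega
  · push_cast
    linear_combination heq

lemma chiM3_mul (a b : ℕ) : chiM3 (a * b) = chiM3 a * chiM3 b := by
  have ha : a % 3 < 3 := Nat.mod_lt _ (by norm_num)
  have hb : b % 3 < 3 := Nat.mod_lt _ (by norm_num)
  simp only [chiM3, Nat.mul_mod a b 3]
  generalize a % 3 = u at *
  generalize b % 3 = v at *
  interval_cases u <;> interval_cases v <;> norm_num

/-- The ring `ℤ[ω]` of Eisenstein integers, with the generator `ω = exp (iπ/3)`, `ω² = ω - 1`,
chosen so that the norm of `x + yω` is `x² + xy + y²`. -/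
abbrev EisensteinInt : Type := QuadraticAlgebra ℤ (-1) 1

namespace EisensteinInt

open QuadraticAlgebra

lemma norm_eq (z : EisensteinInt) : z.norm = z.re ^ 2 + z.re * z.im + z.im ^ 2 := by
  rw [norm_def]; ring

lemma three_mul_re_sq_le (z : EisensteinInt) : 3 * z.re ^ 2 ≤ 4 * z.norm := by
  rw [norm_eq]
  nlinarith [sq_nonneg (z.re + 2 * z.im)]

lemma three_mul_im_sq_le (z : EisensteinInt) : 3 * z.im ^ 2 ≤ 4 * z.norm := by
  rw [norm_eq]
  nlinarith [sq_nonneg (2 * z.re + z.im)]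

lemma finite_norm_eq (n : ℤ) : {z : EisensteinInt | z.norm = n}.Finite := by
  refine ((Set.finite_Icc (-(4 * n)) (4 * n)).prod (Set.finite_Icc (-(4 * n)) (4 * n))).preimage
    (equivProd (-1 : ℤ) 1).injective.injOn |>.subset fun z hz => ?_
  have hre := three_mul_re_sq_le z
  have him := three_mul_im_sq_le z
  rw [hz.out] at hre him
  have habs {u : ℤ} (hu : 3 * u ^ 2 ≤ 4 * n) : u ∈ Set.Icc (-(4 * n)) (4 * n) :=
    ⟨by nlinarith [Int.le_self_sq (-u)], by nlinarith [Int.le_self_sq u]⟩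
  exact ⟨habs hre, habs him⟩

lemma normCount_one : normCount (-1) 1 1 = 6 := by
  have hunits : {z : EisensteinInt | z.norm = (1 : ℕ)} =
      (({⟨1, 0⟩, ⟨-1, 0⟩, ⟨0, 1⟩, ⟨0, -1⟩, ⟨1, -1⟩, ⟨-1, 1⟩} : Finset EisensteinInt) :
        Set EisensteinInt) := by
    ext ⟨x, y⟩
    simp only [Set.mem_ofPred_eq, coe_insert, coe_singleton, Set.mem_insert_iff,
      Set.mem_singleton_iff, QuadraticAlgebra.mk.injEq, Nat.cast_one]
    constructor
    · intro h
      have hx := three_mul_re_sq_le ⟨x, y⟩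
      have hy := three_mul_im_sq_le ⟨x, y⟩
      rw [h] at hx hy
      rw [norm_eq] at h
      have : x ≤ 1 := by nlinarith
      have : -1 ≤ x := by nlinarith
      have : y ≤ 1 := by nlinarith
      have : -1 ≤ y := by nlinarith
      interval_cases x <;> interval_cases y <;> simp_all
    · rintro (⟨rfl, rfl⟩ | ⟨rfl, rfl⟩ | ⟨rfl, rfl⟩ | ⟨rfl, rfl⟩ | ⟨rfl, rfl⟩ | ⟨rfl, rfl⟩) <;>
        norm_num [norm_eq]
  rw [normCount, hunits, Set.ncard_coe_finset]
  rfl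

lemma algebraMap_dvd_of_dvd_norm {p : ℕ} (hp : p.Prime) (hmod : p % 3 = 2) {z : EisensteinInt}
    (h : (p : ℤ) ∣ z.norm) : algebraMap ℤ EisensteinInt p ∣ z := by
  have : Fact p.Prime := ⟨hp⟩
  refine algebraMap_dvd_of_dvd_norm_of_dvd_im (Nat.prime_iff_prime_int.mp hp) h ?_
  by_contra him
  rw [← ZMod.intCast_zmod_eq_zero_iff_dvd] at h him
  have hroot : ∃ t : ZMod p, t ^ 2 + t + 1 = 0 := by
    refine ⟨z.re / z.im, ?_⟩
    rw [norm_eq] at h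
    push_cast at h
    field_simp
    linear_combination h
  have := (exists_zmod_sq_add_self_add_one_eq_zero_iff hp (by omega)).mp hroot
  omega

theorem exists_norm_eq {p : ℕ} (hp : p.Prime) (hmod : p % 3 = 1) :
    ∃ π : EisensteinInt, π.norm = p := by
  obtain ⟨t, ht⟩ := (exists_zmod_sq_add_self_add_one_eq_zero_iff hp (by omega)).mpr hmod
  obtain ⟨x, y, hne, hx, hy, hxy⟩ :=
    exists_sq_lt_and_intCast_eq_mul hp.prime.irreducible.not_isSquare t
  let z : EisensteinInt := ⟨x, y⟩
  have hz : z.norm = x ^ 2 + x * y + y ^ 2 := norm_eq z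
  have hdvd : (p : ℤ) ∣ z.norm := by
    rw [hz, ← ZMod.intCast_zmod_eq_zero_iff_dvd]
    push_cast
    rw [hxy]
    linear_combination (y : ZMod p) ^ 2 * ht
  obtain ⟨m, hm⟩ := hdvd
  have hpos : 0 < z.norm := by
    rw [hz]
    obtain h | h := hne <;>
      nlinarith [sq_pos_of_ne_zero h, sq_nonneg (x + 2 * y), sq_nonneg (2 * x + y)]
  have hlt : z.norm < p * 3 := by
    rw [hz]
    nlinarith [sq_nonneg (x - y)]
  rw [hm] at hpos hlt
  have hp0 : (0 : ℤ) < p := mod_cast hp.pos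
  have hm0 : 0 < m := pos_of_mul_pos_right hpos hp0.le
  have hm3 : m < 3 := lt_of_mul_lt_mul_left hlt hp0.le
  obtain rfl | rfl : m = 1 ∨ m = 2 := by omega
  · exact ⟨z, by rw [hm, mul_one]⟩
  -- `2` is inert, so a norm is never exactly divisible by `2`.
  · have hfour : (2 : ℤ) ^ 2 ∣ p * 2 := by
      have := map_dvd QuadraticAlgebra.norm
        (algebraMap_dvd_of_dvd_norm Nat.prime_two rfl (hm ▸ dvd_mul_left _ _))
      rwa [QuadraticAlgebra.norm_algebraMap, hm] at this
    have := (Nat.prime_dvd_prime_iff_eq Nat.prime_two hp).mp (by omega)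
    omega

theorem heckeRecurrence_normCount :
    HeckeRecurrence chiM3 fun n => (normCount (-1) 1 n : ℤ) := by
  intro p n hp _
  beta_reduce
  rw [← natCast_atQuotient]
  obtain hmod | hmod | hmod : p % 3 = 0 ∨ p % 3 = 1 ∨ p % 3 = 2 := by omega
  · obtain rfl : 3 = p := (Nat.prime_dvd_prime_iff_eq Nat.prime_three hp).mp (by omega)
    have hstar : (⟨1, 1⟩ : EisensteinInt) ∣ star ⟨1, 1⟩ := ⟨⟨1, -1⟩, rfl⟩
    rw [normCount_prime_mul_of_dvd_star hp rfl hstar]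
    simp [chiM3]
  · obtain ⟨π, hπ⟩ := exists_norm_eq hp hmod
    have hdisc : ¬ (p : ℤ) ∣ 1 ^ 2 + 4 * (-1) := by
      intro h
      have hp3 : p ∣ 3 := Int.natCast_dvd_natCast.mp (dvd_neg.mp h)
      have := (Nat.prime_dvd_prime_iff_eq hp Nat.prime_three).mp hp3
      omega
    have := normCount_prime_mul_of_not_dvd_disc hp hπ hdisc (finite_norm_eq (p * n : ℕ))
    simp only [chiM3, hmod, if_true]
    linarith
  · rw [normCount_mul_of_forall_dvd hp.ne_zero
      fun z => algebraMap_dvd_of_dvd_norm hp hmod]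
    simp [chiM3, hmod]

theorem normCount_eq_six_mul_sum_divisors {n : ℕ} (hn : 0 < n) :
    (normCount (-1) 1 n : ℤ) = 6 * ∑ d ∈ n.divisors, chiM3 d := by
  have := heckeRecurrence_normCount.mul_eq_mul (heckeRecurrence_sum_divisors chiM3_mul) hn
  simpa [normCount_one, chiM3] using this

theorem atQuotient_normCount_eq_six_mul_Sdiv {n : ℕ} (hn : 0 < n) (k : ℕ) :
    ((atQuotient (normCount (-1) 1) n k : ℕ) : ℤ) = 6 * Sdiv chiM3 n k := by
  rw [natCast_atQuotient, Sdiv_eq_atQuotient,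
    atQuotient_congr hn fun m hm _ => normCount_eq_six_mul_sum_divisors hm]
  simp only [atQuotient, mul_ite, mul_zero]

/-- The Eisenstein integers `x + yω` of norm `n` with `(x % 2, y % 2) = (i, j)`; only
`i, j ∈ {0, 1}` give nonempty sets. -/
def parityClass (n : ℕ) (i j : ℤ) : Set EisensteinInt :=
  {z | z.norm = n ∧ z.re % 2 = i ∧ z.im % 2 = j}

lemma finite_parityClass (n : ℕ) (i j : ℤ) : (parityClass n i j).Finite :=
  (finite_norm_eq n).subset fun _ hz => hz.1

lemma ncard_parityClass_le (n : ℕ) (i j : ℤ) :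
    (parityClass n i j).ncard ≤ (parityClass n j ((i + j) % 2)).ncard := by
  have hω : QuadraticAlgebra.norm (ω : EisensteinInt) = 1 := by simp [norm_def]
  refine Set.ncard_le_ncard_of_injOn (ω * ·) ?_ ?_ (finite_parityClass n _ _)
  · rintro z ⟨hz, hre, him⟩
    have hre_mul : (ω * z).re = -z.im := by simp
    have him_mul : (ω * z).im = z.re + z.im := by simp
    exact ⟨by rw [map_mul, hω, one_mul, hz], by omega, by omega⟩
  · have hreg : ω ∈ nonZeroDivisors EisensteinInt :=
      norm_mem_nonZeroDivisors_iff.mp (by simp [hω])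
    exact fun _ _ _ _ => (mul_cancel_left_mem_nonZeroDivisors hreg).mp

lemma ncard_parityClass_eq (n : ℕ) :
    (parityClass n 0 1).ncard = (parityClass n 1 0).ncard ∧
      (parityClass n 1 1).ncard = (parityClass n 1 0).ncard := by
  have h₁ : (parityClass n 1 0).ncard ≤ (parityClass n 0 1).ncard := ncard_parityClass_le n 1 0
  have h₂ : (parityClass n 0 1).ncard ≤ (parityClass n 1 1).ncard := ncard_parityClass_le n 0 1
  have h₃ : (parityClass n 1 1).ncard ≤ (parityClass n 1 0).ncard := ncard_parityClass_le n 1 1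
  omega

lemma ncard_parityClass_zero_zero (n : ℕ) :
    (parityClass n 0 0).ncard = atQuotient (normCount (-1) 1) n 4 := by
  rw [← ncard_norm_eq_and_dvd (α := algebraMap ℤ EisensteinInt 2) four_ne_zero
    (QuadraticAlgebra.norm_algebraMap _)]
  congr 1
  ext z
  simp only [parityClass, Set.mem_ofPred_eq, algebraMap_dvd_iff, Int.dvd_iff_emod_eq_zero]

lemma normCount_eq_sum_ncard_parityClass (n : ℕ) :
    normCount (-1) 1 n =
      ∑ ij ∈ ({0, 1} ×ˢ {0, 1} : Finset (ℤ × ℤ)), (parityClass n ij.1 ij.2).ncard := by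
  rw [normCount, Set.ncard_eq_toFinset_card _ (finite_norm_eq n),
    card_eq_sum_card_fiberwise (f := fun z : EisensteinInt => (z.re % 2, z.im % 2))
      (t := {0, 1} ×ˢ {0, 1})]
  · refine sum_congr rfl fun ij _ => ?_
    rw [← Set.ncard_coe_finset]
    congr 1
    ext z
    simp [parityClass, Prod.ext_iff]
  · intro z _
    simp only [mem_coe, mem_product, mem_insert, mem_singleton]
    omega

theorem normCount_eq_atQuotient_four_add (n : ℕ) :
    normCount (-1) 1 n =
      atQuotient (normCount (-1) 1) n 4 + 3 * (parityClass n 1 0).ncard := by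
  obtain ⟨h₀₁, h₁₁⟩ := ncard_parityClass_eq n
  rw [normCount_eq_sum_ncard_parityClass, ← ncard_parityClass_zero_zero, sum_product,
    sum_pair zero_ne_one, sum_pair zero_ne_one, sum_pair zero_ne_one, h₀₁, h₁₁]
  ring

end EisensteinInt

theorem rep_x2_xy_y2_x1mod2_y0mod2 (n : ℕ) (hn : 0 < n) :
    ({p : ℤ × ℤ | p.1 ^ 2 + p.1 * p.2 + p.2 ^ 2 = (n : ℤ) ∧ p.1 % 2 = 1 ∧ p.2 % 2 = 0}.ncard : ℤ) =
      2 * Sdiv chiM3 n 1 - 2 * Sdiv chiM3 n 4 := by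
  have hpairs : {p : ℤ × ℤ | p.1 ^ 2 + p.1 * p.2 + p.2 ^ 2 = (n : ℤ) ∧ p.1 % 2 = 1 ∧ p.2 % 2 = 0} =
      QuadraticAlgebra.equivProd (-1) 1 '' EisensteinInt.parityClass n 1 0 := by
    rw [Equiv.image_eq_preimage_symm]
    ext p
    simp [EisensteinInt.parityClass, EisensteinInt.norm_eq]
  have hone := EisensteinInt.atQuotient_normCount_eq_six_mul_Sdiv hn 1
  have hfour := EisensteinInt.atQuotient_normCount_eq_six_mul_Sdiv hn 4
  have hparity := EisensteinInt.normCount_eq_atQuotient_four_add n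
  rw [atQuotient_one_right, hparity] at hone
  rw [hpairs, Set.ncard_image_of_injective _ (Equiv.injective _)]
  push_cast at hone
  linarith
end

section
/- For every positive integer n, the number of pairs (x, y) ∈ ℤ² with x² + xy + y² = n and x ≡ y ≡ 1 (mod 3) equals 3 ∑_{d|(n/3)} χ₋₃(d) − 3 ∑_{d|(n/9)} χ₋₃(d). -/
open Finset

/-!
In the ring `ℤ[ω]` of Eisenstein integers, `x² + x y + y²` is the norm of `x + y ω`. If `β` has
norm `k > 0`, then multiplication by `β` identifies the elements of norm `n / k` with the multiples
of `β` of norm `n`. As `ℤ[ω]` is Euclidean, this governs how the number `r` of elements of a given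
norm changes under multiplication by a rational prime `p`: it is unchanged for the ramified prime
`3`; for inert `p ≡ 2 (mod 3)` every element of norm `p n` is a multiple of `p`; for split
`p = π π̄ ≡ 1 (mod 3)` inclusion-exclusion over the multiples of `π` and of `π̄` gives
`r (p n) + r (n / p) = 2 r n`. These are the relations satisfied by `n ↦ ∑_{d ∣ n} χ₋₃ d`, and they
determine a function from its value at `1`, so `r n = 6 ∑_{d ∣ n} χ₋₃ d`.

The multiples of `1 + ω`, which has norm `3`, are the `x + y ω` with `x ≡ y (mod 3)`. Those with
`x ≡ y ≡ 1` and `x ≡ y ≡ 2` are exchanged by negation, and those with `x ≡ y ≡ 0` are the multiples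
of `3`, which has norm `9`. Hence twice the required count is
`6 ∑_{d ∣ n/3} χ₋₃ d - 6 ∑_{d ∣ n/9} χ₋₃ d`.
-/

section Divisors

theorem sum_divisors_filter_dvd_s11 {M : Type*} [AddCommMonoid M] (f : ℕ → M) (k n : ℕ) :
    ∑ d ∈ n.divisors with k ∣ d, f d =
      if k ∣ n then ∑ d ∈ (n / k).divisors, f (k * d) else 0 := by
  rcases n.eq_zero_or_pos with rfl | hn
  · simp
  split_ifs with h
  · obtain ⟨m, rfl⟩ := h
    have hk : 0 < k := Nat.pos_of_mul_pos_right hn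
    have himage : {d ∈ (k * m).divisors | k ∣ d} = m.divisors.image (k * ·) := by
      ext d
      simp only [mem_filter, Nat.mem_divisors, mem_image]
      constructor
      · rintro ⟨⟨hd, h0⟩, e, rfl⟩
        exact ⟨e, ⟨Nat.dvd_of_mul_dvd_mul_left hk hd, right_ne_zero_of_mul h0⟩, rfl⟩
      · rintro ⟨e, ⟨he, -⟩, rfl⟩
        exact ⟨⟨Nat.mul_dvd_mul_left k he, hn.ne'⟩, dvd_mul_right k e⟩
    rw [Nat.mul_div_cancel_left m hk, himage, sum_image (mul_right_injective₀ hk.ne').injOn]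
  · refine sum_eq_zero fun d hd => absurd ?_ h
    rw [mem_filter, Nat.mem_divisors] at hd
    exact hd.2.trans hd.1.1

theorem divisors_prime_mul_filter_not_dvd_s11 {p n : ℕ} (hp : p.Prime) :
    {d ∈ (p * n).divisors | ¬ p ∣ d} = {d ∈ n.divisors | ¬ p ∣ d} := by
  ext d
  simp only [mem_filter, Nat.mem_divisors, mul_ne_zero_iff, hp.ne_zero, ne_eq,
    not_false_eq_true, true_and, and_congr_left_iff]
  exact fun hpd _ => (hp.coprime_iff_not_dvd.2 hpd).symm.dvd_mul_left

/-- The relation `T_p F = (1 + χ p) F` for every prime `p`, where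
`T_p F n = F (p n) + χ p F (n / p)` is the Hecke operator of weight one and character `χ`.
The term `F (n / p)` is omitted when `p ∤ n`. -/
def HeckeRelation {R : Type*} [CommRing R] (χ F : ℕ → R) : Prop :=
  ∀ ⦃p n : ℕ⦄, p.Prime → 0 < n →
    F (p * n) + χ p * (if p ∣ n then F (n / p) else 0) = (1 + χ p) * F n

variable {R : Type*} [CommRing R] {χ F G : ℕ → R}

theorem HeckeRelation.eq_mul (hF : HeckeRelation χ F) (hG : HeckeRelation χ G) {c : R}
    (h_one : F 1 = c * G 1) {n : ℕ} (hn : 0 < n) : F n = c * G n := by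
  induction n using Nat.strong_induction_on with
  | _ n ih =>
    rcases eq_or_ne n 1 with rfl | hn1
    · exact h_one
    obtain ⟨p, hp, m, rfl⟩ := Nat.exists_prime_and_dvd hn1
    have hm : 0 < m := Nat.pos_of_mul_pos_left hn
    have hlt : m < p * m := lt_mul_of_one_lt_left hm hp.one_lt
    have ih_div : (if p ∣ m then F (m / p) else 0) = c * if p ∣ m then G (m / p) else 0 := by
      split_ifs with h
      · exact ih _ ((Nat.div_le_self m p).trans_lt hlt) (Nat.div_pos (Nat.le_of_dvd hm h) hp.pos)
      · rw [mul_zero]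
    linear_combination hF hp hm - c * hG hp hm + (1 + χ p) * ih m hlt hm - χ p * ih_div

theorem heckeRelation_sum_divisors (hχ : ∀ m n, χ (m * n) = χ m * χ n) :
    HeckeRelation χ fun n => ∑ d ∈ n.divisors, χ d := by
  intro p n hp _
  have hsplit (m : ℕ) : ∑ d ∈ m.divisors, χ d =
      χ p * (if p ∣ m then ∑ d ∈ (m / p).divisors, χ d else 0) +
        ∑ d ∈ m.divisors with ¬ p ∣ d, χ d := by
    rw [← sum_filter_add_sum_filter_not _ (p ∣ ·), sum_divisors_filter_dvd_s11]
    simp only [hχ, ← mul_sum, mul_ite, mul_zero]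
  have hpn := hsplit (p * n)
  rw [if_pos (dvd_mul_right p n), Nat.mul_div_cancel_left n hp.pos,
    divisors_prime_mul_filter_not_dvd_s11 hp] at hpn
  linear_combination hpn - hsplit n

end Divisors

theorem chiM3_mul_s11 (m n : ℕ) : chiM3 (m * n) = chiM3 m * chiM3 n := by
  have hm : m % 3 < 3 := Nat.mod_lt _ (by norm_num)
  have hn : n % 3 < 3 := Nat.mod_lt _ (by norm_num)
  simp only [chiM3, Nat.mul_mod m n]
  interval_cases m % 3 <;> interval_cases n % 3 <;> rfl

section QuadraticAlgebra

open QuadraticAlgebra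

section CommRing

variable {R : Type*} [CommRing R] {a b : R} {α π : QuadraticAlgebra R a b} {k : ℕ}

theorem natCast_dvd_quadraticAlgebra_iff :
    (k : QuadraticAlgebra R a b) ∣ α ↔ (k : R) ∣ α.re ∧ (k : R) ∣ α.im := by
  rw [← algebraMap_dvd_iff, map_natCast]

theorem natCast_eq_mul_star_of_norm_eq (h : α.norm = k) :
    (k : QuadraticAlgebra R a b) = α * star α := by
  rw [← algebraMap_norm_eq_mul_star, h, map_natCast]

theorem irreducible_of_irreducible_norm (h : Irreducible α.norm) : Irreducible α where
  not_isUnit hα := h.not_isUnit (isUnit_iff_norm_isUnit.1 hα)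
  isUnit_or_isUnit β γ hβγ := by
    simp only [isUnit_iff_norm_isUnit]
    exact h.isUnit_or_isUnit (by rw [hβγ, map_mul])

theorem dvd_or_star_dvd_of_dvd_natCast_norm (hπ : Prime π) (hα : α.norm = k)
    (h : π ∣ (k : QuadraticAlgebra R a b)) : π ∣ α ∨ star π ∣ α := by
  rw [natCast_eq_mul_star_of_norm_eq hα] at h
  refine (hπ.dvd_or_dvd h).imp_right fun hdvd => ?_
  simpa only [starRingEnd_apply, star_star] using map_dvd (starRingEnd _) hdvd

end CommRing

variable {a b : ℤ} {α β : QuadraticAlgebra ℤ a b} {k p : ℕ}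

theorem isUnit_iff_natAbs_norm_eq_one : IsUnit α ↔ α.norm.natAbs = 1 := by
  rw [isUnit_iff_norm_isUnit, Int.isUnit_iff_natAbs_eq]

theorem exists_natAbs_norm_eq_of_not_irreducible (hp : p.Prime)
    (hirr : ¬ Irreducible (p : QuadraticAlgebra ℤ a b)) :
    ∃ π : QuadraticAlgebra ℤ a b, π.norm.natAbs = p := by
  have hnorm : (QuadraticAlgebra.norm (p : QuadraticAlgebra ℤ a b)).natAbs = p ^ 2 := by
    rw [QuadraticAlgebra.norm_natCast, Int.natAbs_pow, Int.natAbs_natCast]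
  have hunit : ¬ IsUnit (p : QuadraticAlgebra ℤ a b) := by
    rw [isUnit_iff_natAbs_norm_eq_one, hnorm]
    exact (Nat.one_lt_pow two_ne_zero hp.one_lt).ne'
  obtain ⟨β, γ, hβγ, hβ, hγ⟩ : ∃ β γ, (p : QuadraticAlgebra ℤ a b) = β * γ ∧
      ¬ IsUnit β ∧ ¬ IsUnit γ := by
    simpa [irreducible_iff, hunit] using hirr
  rw [isUnit_iff_natAbs_norm_eq_one] at hβ hγ
  rw [hβγ, map_mul, Int.natAbs_mul, hp.mul_eq_prime_sq_iff hβ hγ] at hnorm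
  exact ⟨β, hnorm.1⟩

theorem ncard_norm_eq_and_dvd_s11 (hβ : β.norm = k) (hk : 0 < k) (n : ℕ) :
    {α : QuadraticAlgebra ℤ a b | α.norm = n ∧ β ∣ α}.ncard =
      if k ∣ n then {γ : QuadraticAlgebra ℤ a b | γ.norm = (n / k : ℕ)}.ncard else 0 := by
  split_ifs with h
  · obtain ⟨m, rfl⟩ := h
    have hk0 : (k : ℤ) ≠ 0 := by exact_mod_cast hk.ne'
    have hβ0 : β ∈ nonZeroDivisors (QuadraticAlgebra ℤ a b) := by
      rw [← norm_mem_nonZeroDivisors_iff, hβ]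
      exact mem_nonZeroDivisors_of_ne_zero hk0
    have hinj : Function.Injective (β * ·) := fun _ _ =>
      (mul_cancel_left_mem_nonZeroDivisors hβ0).1
    have himage : {α : QuadraticAlgebra ℤ a b | α.norm = (k * m : ℕ) ∧ β ∣ α} =
        (β * ·) '' {γ | γ.norm = m} := by
      ext α
      constructor
      · rintro ⟨hα, γ, rfl⟩
        rw [map_mul, hβ, Nat.cast_mul] at hα
        exact ⟨γ, mul_left_cancel₀ hk0 hα, rfl⟩
      · rintro ⟨γ, hγ, rfl⟩
        refine ⟨?_, dvd_mul_right β γ⟩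
        rw [map_mul, hβ, hγ, Nat.cast_mul]
    rw [Nat.mul_div_cancel_left m hk, himage, Set.ncard_image_of_injective _ hinj]
  · convert Set.ncard_empty (QuadraticAlgebra ℤ a b)
    refine Set.eq_empty_iff_forall_notMem.2 ?_
    rintro α ⟨hα, hβα⟩
    exact h (Int.natCast_dvd_natCast.1 (hβ ▸ hα ▸ map_dvd QuadraticAlgebra.norm hβα))

end QuadraticAlgebra

theorem exists_sq_add_self_add_one_eq_zero {F : Type*} [Field F] [Fintype F]
    (h : 3 ∣ Fintype.card F - 1) : ∃ x : F, x ^ 2 + x + 1 = 0 := by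
  classical
  obtain ⟨u, hu⟩ := exists_prime_orderOf_dvd_card 3 ((Fintype.card_units F).symm ▸ h)
  have hζ : IsPrimitiveRoot (u : F) 3 :=
    IsPrimitiveRoot.coe_units_iff.2 (hu ▸ IsPrimitiveRoot.orderOf u)
  refine ⟨u, ?_⟩
  have := hζ.geom_sum_eq_zero (by norm_num)
  simp only [sum_range_succ, range_zero, sum_empty] at this
  linear_combination this

theorem exists_dvd_sq_add_self_add_one {p : ℕ} (hp : p.Prime) (h : p % 3 = 1) :
    ∃ k : ℤ, (p : ℤ) ∣ k ^ 2 + k + 1 := by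
  have : Fact p.Prime := ⟨hp⟩
  obtain ⟨x, hx⟩ := exists_sq_add_self_add_one_eq_zero (F := ZMod p) (by
    rw [ZMod.card]
    omega)
  obtain ⟨k, rfl⟩ := ZMod.intCast_surjective x
  exact ⟨k, (ZMod.intCast_zmod_eq_zero_iff_dvd _ p).1 (by exact_mod_cast hx)⟩

theorem two_mul_abs_sub_mul_round_div_le (u : ℤ) {m : ℤ} (hm : 0 < m) :
    2 * |u - m * round (u / m : ℚ)| ≤ m := by
  have hm' : (0 : ℚ) < m := by exact_mod_cast hm
  have hround := abs_sub_round (u / m : ℚ)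
  have hscale : (u - m * round (u / m : ℚ) : ℚ) = m * (u / m - round (u / m : ℚ)) := by
    field_simp
  have hle : 2 * |(u - m * round (u / m : ℚ) : ℚ)| ≤ m := by
    rw [hscale, abs_mul, abs_of_pos hm']
    nlinarith
  exact_mod_cast hle

/-- The ring `ℤ[ω]` of Eisenstein integers, with `ω² = ω - 1`: here `ω` is a primitive sixth root
of unity, so that the norm of `x + y ω` is `x² + x y + y²`. -/
abbrev EisensteinInteger : Type := QuadraticAlgebra ℤ (-1) 1

namespace EisensteinInteger

open QuadraticAlgebra

variable {α π : EisensteinInteger} {p n : ℕ}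

theorem norm_eq (α : EisensteinInteger) :
    α.norm = α.re ^ 2 + α.re * α.im + α.im ^ 2 := by
  rw [norm_def]
  ring

theorem re_sub_im_sq (α : EisensteinInteger) :
    (α.re - α.im) ^ 2 = α.norm - 3 * (α.re * α.im) := by
  rw [norm_eq]
  ring

theorem three_mul_re_sq_le (α : EisensteinInteger) : 3 * α.re ^ 2 ≤ 4 * α.norm := by
  rw [norm_eq]
  nlinarith [sq_nonneg (α.re + 2 * α.im)]

theorem three_mul_im_sq_le (α : EisensteinInteger) : 3 * α.im ^ 2 ≤ 4 * α.norm := by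
  rw [norm_eq]
  nlinarith [sq_nonneg (2 * α.re + α.im)]

theorem norm_nonneg (α : EisensteinInteger) : 0 ≤ α.norm := by
  linarith [three_mul_re_sq_le α, sq_nonneg α.re]

theorem norm_pos (hα : α ≠ 0) : 0 < α.norm := by
  refine (norm_nonneg α).lt_of_ne' fun h => hα ?_
  have hre := three_mul_re_sq_le α
  have him := three_mul_im_sq_le α
  rw [h] at hre him
  exact QuadraticAlgebra.ext (pow_eq_zero_iff two_ne_zero |>.1 (by nlinarith [sq_nonneg α.re]))
    (pow_eq_zero_iff two_ne_zero |>.1 (by nlinarith [sq_nonneg α.im]))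

theorem natCast_natAbs_norm (α : EisensteinInteger) : (α.norm.natAbs : ℤ) = α.norm :=
  Int.natAbs_of_nonneg (norm_nonneg α)

theorem finite_setOf_norm_eq (n : ℤ) : {α : EisensteinInteger | α.norm = n}.Finite := by
  refine Set.Finite.of_finite_image (f := equivProd (-1) 1) ?_ (Equiv.injective _).injOn
  refine ((Set.finite_Icc (-(2 * n)) (2 * n)).prod (Set.finite_Icc (-(2 * n)) (2 * n))).subset ?_
  rintro _ ⟨α, rfl, rfl⟩
  have hn : 0 ≤ α.norm := norm_nonneg α
  have hre := three_mul_re_sq_le α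
  have him := three_mul_im_sq_le α
  refine ⟨abs_le.1 (abs_le_of_sq_le_sq ?_ (by positivity)),
    abs_le.1 (abs_le_of_sq_le_sq ?_ (by positivity))⟩
  · change α.re ^ 2 ≤ _
    nlinarith
  · change α.im ^ 2 ≤ _
    nlinarith

section Euclidean

instance : Div EisensteinInteger where
  div α β := ⟨round ((α * star β).re / β.norm : ℚ), round ((α * star β).im / β.norm : ℚ)⟩

theorem div_def (α β : EisensteinInteger) :
    α / β = ⟨round ((α * star β).re / β.norm : ℚ), round ((α * star β).im / β.norm : ℚ)⟩ :=
  rfl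

instance : Mod EisensteinInteger where
  mod α β := α - β * (α / β)

theorem mod_def (α β : EisensteinInteger) : α % β = α - β * (α / β) :=
  rfl

theorem norm_mod_lt (α : EisensteinInteger) {β : EisensteinInteger} (hβ : β ≠ 0) :
    (α % β).norm < β.norm := by
  have hpos := norm_pos hβ
  have hmul : (α % β) * star β = α * star β - algebraMap ℤ _ β.norm * (α / β) := by
    rw [mod_def, algebraMap_norm_eq_mul_star]
    ring
  have hre : 2 * |((α % β) * star β).re| ≤ β.norm := by
    simpa [hmul, div_def] using two_mul_abs_sub_mul_round_div_le (α * star β).re hpos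
  have him : 2 * |((α % β) * star β).im| ≤ β.norm := by
    simpa [hmul, div_def] using two_mul_abs_sub_mul_round_div_le (α * star β).im hpos
  have hlt : (α % β).norm * β.norm < β.norm * β.norm := by
    nth_rw 1 [← QuadraticAlgebra.norm_star β]
    rw [← map_mul, norm_eq]
    set u := ((α % β) * star β).re
    set v := ((α % β) * star β).im
    have huu : |u| ^ 2 = u ^ 2 := sq_abs u
    have hvv : |v| ^ 2 = v ^ 2 := sq_abs v
    have huv : u * v ≤ |u| * |v| := (le_abs_self _).trans (abs_mul u v).le
    nlinarith [abs_nonneg u, abs_nonneg v]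
  exact lt_of_mul_lt_mul_right hlt hpos.le

theorem natAbs_norm_le_natAbs_norm_mul (α : EisensteinInteger) {β : EisensteinInteger}
    (hβ : β ≠ 0) : α.norm.natAbs ≤ (α * β).norm.natAbs := by
  rw [map_mul, Int.natAbs_mul]
  exact Nat.le_mul_of_pos_right _ (Int.natAbs_pos.2 (norm_pos hβ).ne')

instance : EuclideanDomain EisensteinInteger where
  quotient := (· / ·)
  quotient_zero α := by
    refine QuadraticAlgebra.ext ?_ ?_ <;> simp [div_def]
  remainder := (· % ·)
  quotient_mul_add_remainder_eq α β := by rw [mod_def, add_sub_cancel]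
  r := _
  r_wellFounded := (measure fun α : EisensteinInteger => α.norm.natAbs).wf
  remainder_lt α _ hβ := Int.natAbs_lt_natAbs_of_nonneg_of_lt (norm_nonneg _) (norm_mod_lt α hβ)
  mul_left_not_lt α _ hβ := (natAbs_norm_le_natAbs_norm_mul α hβ).not_gt

end Euclidean

section Primes

theorem norm_emod_three_ne_two (α : EisensteinInteger) : α.norm % 3 ≠ 2 := by
  intro h
  have hsq : (α.re - α.im) ^ 2 % 3 = 2 := by
    rw [re_sub_im_sq]
    omega
  rcases (by omega : (α.re - α.im) % 3 = 0 ∨ (α.re - α.im) % 3 = 1 ∨ (α.re - α.im) % 3 = 2)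
    with h | h | h <;> simp [pow_two, Int.mul_emod, h] at hsq

theorem exists_norm_eq_of_not_prime (hp : p.Prime) (h : ¬ Prime (p : EisensteinInteger)) :
    ∃ π : EisensteinInteger, π.norm = p := by
  rw [← irreducible_iff_prime] at h
  obtain ⟨π, hπ⟩ := exists_natAbs_norm_eq_of_not_irreducible hp h
  exact ⟨π, by rw [← hπ, natCast_natAbs_norm]⟩

theorem prime_natCast_of_mod_three_eq_two (hp : p.Prime) (h : p % 3 = 2) :
    Prime (p : EisensteinInteger) := by
  by_contra hprime
  obtain ⟨π, hπ⟩ := exists_norm_eq_of_not_prime hp hprime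
  exact norm_emod_three_ne_two π (by omega)

theorem exists_norm_eq_of_mod_three_eq_one (hp : p.Prime) (h : p % 3 = 1) :
    ∃ π : EisensteinInteger, π.norm = p := by
  refine exists_norm_eq_of_not_prime hp fun hprime => ?_
  obtain ⟨k, hk⟩ := exists_dvd_sq_add_self_add_one hp h
  have hmul : (p : EisensteinInteger) ∣ ⟨k, 1⟩ * star ⟨k, 1⟩ := by
    rw [← algebraMap_norm_eq_mul_star, norm_eq]
    exact map_dvd (algebraMap ℤ EisensteinInteger) (by simpa using hk)
  have hp1 : ¬ (p : ℤ) ∣ 1 := (Nat.prime_iff_prime_int.1 hp).not_dvd_one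
  rcases hprime.dvd_or_dvd hmul with hdvd | hdvd
  · exact hp1 (natCast_dvd_quadraticAlgebra_iff.1 hdvd).2
  · exact hp1 (dvd_neg.1 (natCast_dvd_quadraticAlgebra_iff.1 hdvd).2)

theorem not_dvd_star_of_norm_eq_prime (hp : p.Prime) (hp3 : p ≠ 3) (hπ : π.norm = p) :
    ¬ π ∣ star π := by
  intro h
  have hprime : Prime (p : ℤ) := Nat.prime_iff_prime_int.1 hp
  have hdiff : (π - star π).norm = 3 * π.im ^ 2 := by
    simp only [norm_eq, re_sub, im_sub, re_star, im_star]
    ring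
  have him : (p : ℤ) ∣ π.im := by
    have hdvd : (p : ℤ) ∣ 3 * π.im ^ 2 := by
      rw [← hdiff, ← hπ]
      exact map_dvd QuadraticAlgebra.norm (dvd_sub_self_left.2 h)
    refine hprime.dvd_of_dvd_pow ((hprime.dvd_or_dvd hdvd).resolve_left fun h3 => hp3 ?_)
    exact (Nat.prime_dvd_prime_iff_eq hp Nat.prime_three).1 (by exact_mod_cast h3)
  have hre : (p : ℤ) ∣ π.re := by
    rw [norm_eq] at hπ
    refine hprime.dvd_of_dvd_pow (n := 2) ?_
    rw [show π.re ^ 2 = p - (π.re + π.im) * π.im by linear_combination hπ]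
    exact dvd_sub_self_left.2 (him.mul_left _)
  have hsq : (p : ℤ) ^ 2 ∣ p := by
    have := map_dvd QuadraticAlgebra.norm (natCast_dvd_quadraticAlgebra_iff.2 ⟨hre, him⟩)
    rwa [QuadraticAlgebra.norm_natCast, hπ] at this
  have hle : p ^ 2 ≤ p := Nat.le_of_dvd hp.pos (by exact_mod_cast hsq)
  exact (lt_self_pow₀ hp.one_lt one_lt_two).not_ge hle

theorem mk_one_one_dvd_iff : (⟨1, 1⟩ : EisensteinInteger) ∣ α ↔ (3 : ℤ) ∣ α.re - α.im := by
  constructor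
  · rintro ⟨γ, rfl⟩
    exact ⟨-γ.im, by simp; ring⟩
  · rintro ⟨c, hc⟩
    exact ⟨⟨α.re - c, -c⟩, QuadraticAlgebra.ext (by simp) (by simp; linarith)⟩

theorem mk_one_one_dvd_iff_three_dvd_norm :
    (⟨1, 1⟩ : EisensteinInteger) ∣ α ↔ 3 ∣ α.norm := by
  rw [mk_one_one_dvd_iff, ← Int.prime_three.dvd_pow_iff_dvd two_ne_zero, re_sub_im_sq]
  exact dvd_sub_left (dvd_mul_right _ _)

end Primes

section RepCount

/-- The number of representations of `n` by the form `x² + x y + y²`, counted as Eisenstein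
integers of norm `n`. -/
noncomputable def repCount (n : ℕ) : ℕ := {α : EisensteinInteger | α.norm = n}.ncard

theorem repCount_one : repCount 1 = 6 := by
  have hunits : {α : EisensteinInteger | α.norm = (1 : ℕ)} =
      (({⟨1, 0⟩, ⟨-1, 0⟩, ⟨0, 1⟩, ⟨0, -1⟩, ⟨1, -1⟩, ⟨-1, 1⟩} : Finset EisensteinInteger) :
        Set EisensteinInteger) := by
    ext ⟨x, y⟩
    have hx := three_mul_re_sq_le ⟨x, y⟩
    have hy := three_mul_im_sq_le ⟨x, y⟩
    simp only [norm_eq, Nat.cast_one, Set.mem_ofPred_eq, coe_insert, coe_singleton,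
      Set.mem_insert_iff, Set.mem_singleton_iff, QuadraticAlgebra.mk.injEq] at hx hy ⊢
    constructor
    · intro h
      rw [h] at hx hy
      have hx1 : |x| ≤ 1 := abs_le_one_iff_mul_self_le_one.2 (by nlinarith)
      have hy1 : |y| ≤ 1 := abs_le_one_iff_mul_self_le_one.2 (by nlinarith)
      obtain ⟨hx₁, hx₂⟩ := abs_le.1 hx1
      obtain ⟨hy₁, hy₂⟩ := abs_le.1 hy1
      interval_cases x <;> interval_cases y <;> simp_all
    · rintro (⟨rfl, rfl⟩ | ⟨rfl, rfl⟩ | ⟨rfl, rfl⟩ | ⟨rfl, rfl⟩ | ⟨rfl, rfl⟩ | ⟨rfl, rfl⟩) <;>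
        norm_num
  rw [repCount, hunits, Set.ncard_coe_finset]
  rfl

theorem ncard_norm_eq_and_dvd_eq_repCount {β : EisensteinInteger} {k : ℕ} (hβ : β.norm = k)
    (hk : 0 < k) (n : ℕ) :
    {α : EisensteinInteger | α.norm = n ∧ β ∣ α}.ncard =
      if k ∣ n then repCount (n / k) else 0 :=
  ncard_norm_eq_and_dvd_s11 hβ hk n

theorem ncard_norm_eq_prime_mul_and_natCast_dvd (hp : p.Prime) (n : ℕ) :
    {α : EisensteinInteger | α.norm = (p * n : ℕ) ∧ (p : EisensteinInteger) ∣ α}.ncard =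
      if p ∣ n then repCount (n / p) else 0 := by
  rw [ncard_norm_eq_and_dvd_eq_repCount (k := p * p) (by simp [pow_two]) (mul_pos hp.pos hp.pos)]
  simp only [Nat.mul_dvd_mul_iff_left hp.pos, Nat.mul_div_mul_left _ _ hp.pos]

theorem repCount_three_mul (n : ℕ) : repCount (3 * n) = repCount n := by
  have hcount := ncard_norm_eq_and_dvd_eq_repCount (β := ⟨1, 1⟩) (k := 3) (by simp [norm_eq])
    three_pos (3 * n)
  rw [if_pos (dvd_mul_right 3 n), Nat.mul_div_cancel_left n three_pos] at hcount
  rw [← hcount, repCount]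
  congr 1
  ext α
  refine (and_iff_left_of_imp fun hα => ?_).symm
  rw [mk_one_one_dvd_iff_three_dvd_norm, hα]
  exact ⟨n, by push_cast; rfl⟩

theorem repCount_mul_of_mod_three_eq_two (hp : p.Prime) (h : p % 3 = 2) (n : ℕ) :
    repCount (p * n) = if p ∣ n then repCount (n / p) else 0 := by
  rw [← ncard_norm_eq_prime_mul_and_natCast_dvd hp, repCount]
  congr 1
  ext α
  refine (and_iff_left_of_imp fun hα => ?_).symm
  have hdvd := dvd_or_star_dvd_of_dvd_natCast_norm (prime_natCast_of_mod_three_eq_two hp h) hα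
    (Nat.cast_dvd_cast (dvd_mul_right p n))
  rwa [star_natCast, or_self] at hdvd

theorem repCount_mul_add_of_mod_three_eq_one (hp : p.Prime) (h : p % 3 = 1) (n : ℕ) :
    repCount (p * n) + (if p ∣ n then repCount (n / p) else 0) = 2 * repCount n := by
  obtain ⟨π, hπ⟩ := exists_norm_eq_of_mod_three_eq_one hp h
  have hprime : Prime π := by
    refine (irreducible_of_irreducible_norm ?_).prime
    rw [hπ]
    exact (Nat.prime_iff_prime_int.1 hp).irreducible
  have hcount (β : EisensteinInteger) (hβ : β.norm = p) :
      {α : EisensteinInteger | α.norm = (p * n : ℕ) ∧ β ∣ α}.ncard = repCount n := by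
    rw [ncard_norm_eq_and_dvd_eq_repCount hβ hp.pos, if_pos (dvd_mul_right p n),
      Nat.mul_div_cancel_left n hp.pos]
  have hunion : {α : EisensteinInteger | α.norm = (p * n : ℕ)} =
      {α : EisensteinInteger | α.norm = (p * n : ℕ) ∧ π ∣ α} ∪
        {α : EisensteinInteger | α.norm = (p * n : ℕ) ∧ star π ∣ α} := by
    ext α
    simp only [Set.mem_union, Set.mem_ofPred_eq, ← and_or_left]
    refine (and_iff_left_of_imp fun hα => dvd_or_star_dvd_of_dvd_natCast_norm hprime hα ?_).symm
    rw [Nat.cast_mul, natCast_eq_mul_star_of_norm_eq hπ, mul_assoc]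
    exact dvd_mul_right _ _
  have hinter : {α : EisensteinInteger | α.norm = (p * n : ℕ) ∧ (p : EisensteinInteger) ∣ α} =
      {α : EisensteinInteger | α.norm = (p * n : ℕ) ∧ π ∣ α} ∩
        {α : EisensteinInteger | α.norm = (p * n : ℕ) ∧ star π ∣ α} := by
    ext α
    simp only [Set.mem_inter_iff, Set.mem_ofPred_eq, ← and_and_left]
    refine and_congr_right fun _ => ?_
    rw [natCast_eq_mul_star_of_norm_eq hπ]
    refine ⟨fun hα => ⟨dvd_of_mul_right_dvd hα, dvd_of_mul_left_dvd hα⟩, ?_⟩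
    rintro ⟨hπα, γ, rfl⟩
    have hγ := (hprime.dvd_or_dvd hπα).resolve_left
      (not_dvd_star_of_norm_eq_prime hp (by omega) hπ)
    exact mul_comm π (star π) ▸ mul_dvd_mul_left _ hγ
  rw [← ncard_norm_eq_prime_mul_and_natCast_dvd hp, hinter, repCount, hunion,
    Set.ncard_union_add_ncard_inter _ _ ((finite_setOf_norm_eq _).subset fun _ hα => hα.1)
      ((finite_setOf_norm_eq _).subset fun _ hα => hα.1),
    hcount π hπ, hcount (star π) ((QuadraticAlgebra.norm_star π).trans hπ), two_mul]

theorem heckeRelation_repCount : HeckeRelation chiM3 fun n => (repCount n : ℤ) := by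
  intro p n hp _
  beta_reduce
  rcases (by omega : p % 3 = 0 ∨ p % 3 = 1 ∨ p % 3 = 2) with h | h | h
  · obtain rfl : 3 = p :=
      (Nat.prime_dvd_prime_iff_eq Nat.prime_three hp).1 (Nat.dvd_of_mod_eq_zero h)
    simp [chiM3, repCount_three_mul]
  · have hrec := repCount_mul_add_of_mod_three_eq_one hp h n
    have hχ : chiM3 p = 1 := by simp [chiM3, h]
    rw [hχ, one_mul, one_add_one_eq_two]
    exact_mod_cast hrec
  · have hχ : chiM3 p = -1 := by simp [chiM3, h]
    rw [hχ, repCount_mul_of_mod_three_eq_two hp h, Nat.cast_ite, Nat.cast_zero]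
    ring

theorem repCount_eq (hn : 0 < n) : (repCount n : ℤ) = 6 * ∑ d ∈ n.divisors, chiM3 d :=
  heckeRelation_repCount.eq_mul (heckeRelation_sum_divisors chiM3_mul_s11)
    (by simp [repCount_one, chiM3]) hn

theorem ncard_norm_eq_and_dvd_eq_Sdiv {β : EisensteinInteger} {k : ℕ} (hβ : β.norm = k)
    (hk : 0 < k) (hn : 0 < n) :
    ({α : EisensteinInteger | α.norm = n ∧ β ∣ α}.ncard : ℤ) = 6 * Sdiv chiM3 n k := by
  rw [ncard_norm_eq_and_dvd_eq_repCount hβ hk, Sdiv]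
  split_ifs with h
  · exact repCount_eq (Nat.div_pos (Nat.le_of_dvd hn h) hk)
  · simp

end RepCount

theorem ncard_norm_eq_and_mk_one_one_dvd (n : ℕ) :
    {α : EisensteinInteger | α.norm = n ∧ ⟨1, 1⟩ ∣ α}.ncard =
      2 * {α : EisensteinInteger | α.norm = n ∧ α.re % 3 = 1 ∧ α.im % 3 = 1}.ncard +
        {α : EisensteinInteger | α.norm = n ∧ ((3 : ℕ) : EisensteinInteger) ∣ α}.ncard := by
  set A := {α : EisensteinInteger | α.norm = n ∧ α.re % 3 = 1 ∧ α.im % 3 = 1} with hA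
  set C := {α : EisensteinInteger | α.norm = n ∧ ((3 : ℕ) : EisensteinInteger) ∣ α} with hC
  have hmem_neg (α : EisensteinInteger) :
      α ∈ -A ↔ α.norm = n ∧ α.re % 3 = 2 ∧ α.im % 3 = 2 := by
    simp only [hA, Set.mem_neg, Set.mem_ofPred_eq, QuadraticAlgebra.norm_neg, re_neg, im_neg]
    omega
  have hunion : {α : EisensteinInteger | α.norm = n ∧ ⟨1, 1⟩ ∣ α} = A ∪ -A ∪ C := by
    ext α
    rw [Set.mem_union, Set.mem_union, hmem_neg]
    simp only [hA, hC, Set.mem_ofPred_eq, mk_one_one_dvd_iff, natCast_dvd_quadraticAlgebra_iff]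
    omega
  have hdisj_neg : Disjoint A (-A) := Set.disjoint_left.2 fun α hα hα' => by
    have := hα.2.1
    have := ((hmem_neg α).1 hα').2.1
    omega
  have hdisj : Disjoint (A ∪ -A) C := Set.disjoint_left.2 fun α hα hα' => by
    have := (natCast_dvd_quadraticAlgebra_iff.1 hα'.2).1
    rcases hα with hα | hα
    · have := hα.2.1
      omega
    · have := ((hmem_neg α).1 hα).2.1
      omega
  have hfin : A.Finite := (finite_setOf_norm_eq n).subset fun _ hα => hα.1
  have hfinC : C.Finite := (finite_setOf_norm_eq n).subset fun _ hα => hα.1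
  rw [hunion, Set.ncard_union_eq hdisj (hfin.union hfin.neg) hfinC,
    Set.ncard_union_eq hdisj_neg hfin hfin.neg, Set.ncard_neg, two_mul]

end EisensteinInteger

theorem rep_x2_xy_y2_x1mod3_y1mod3 (n : ℕ) (hn : 0 < n) :
    ({p : ℤ × ℤ | p.1 ^ 2 + p.1 * p.2 + p.2 ^ 2 = (n : ℤ) ∧ p.1 % 3 = 1 ∧ p.2 % 3 = 1}.ncard : ℤ) =
      3 * Sdiv chiM3 n 3 - 3 * Sdiv chiM3 n 9 := by
  have hset : {p : ℤ × ℤ | p.1 ^ 2 + p.1 * p.2 + p.2 ^ 2 = (n : ℤ) ∧ p.1 % 3 = 1 ∧ p.2 % 3 = 1} =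
      QuadraticAlgebra.equivProd (-1) 1 ''
        {α : EisensteinInteger | α.norm = n ∧ α.re % 3 = 1 ∧ α.im % 3 = 1} := by
    ext p
    rw [Equiv.image_eq_preimage_symm]
    simp [EisensteinInteger.norm_eq]
  have hsplit := EisensteinInteger.ncard_norm_eq_and_mk_one_one_dvd n
  have hthree := EisensteinInteger.ncard_norm_eq_and_dvd_eq_Sdiv (β := ⟨1, 1⟩) (k := 3)
    (by simp [EisensteinInteger.norm_eq]) three_pos hn
  have hnine := EisensteinInteger.ncard_norm_eq_and_dvd_eq_Sdiv (β := (3 : ℕ)) (k := 9)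
    (by rw [QuadraticAlgebra.norm_natCast]; norm_num) (by norm_num) hn
  rw [hset, Set.ncard_image_of_injective _ (Equiv.injective _)]
  rw [hsplit, Nat.cast_add, Nat.cast_mul, hnine, Nat.cast_ofNat] at hthree
  linarith
end
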